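/- Let S ⊆ M_n(ℂ) be a noncommutative graph. Then H(S) equals the minimum k for which there exist m ∈ ℕ and matrices E_1,…,E_m, F_1,…,F_m ∈ M_{k×n}(ℂ) satisfying ∑_{i=1}^m F_i† E_i = I_n and F_i† E_j ∈ S for all i,j ∈ [m]. -/

import Mathlib

/-!
Stacking the matrices `E j` side by side into a `k × mn` matrix `D`, and the `(F i)ᴴ` on top of one
another into an `mn × k` matrix `C`, the product `C * D` is the block matrix with blocks
`(F i)ᴴ * E j`. Its rank is at most `k`, so a feasible family of size `k` yields a feasible block
matrix of rank at most `k`. Conversely a block matrix of rank `k` factors as `C * D` through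
`ℂ^k` (`exists_rank_factorization`), and slicing the two factors recovers `E` and `F`.
-/

open Matrix

noncomputable section

/-- The `(i,j)` block of an `m × m` block matrix with `ι × ι` blocks. -/
def blockOf {m : ℕ} {ι : Type} (B : Matrix (Fin m × ι) (Fin m × ι) ℂ)
    (i j : Fin m) : Matrix ι ι ℂ :=
  Matrix.of fun a b => B (i, a) (j, b)

/-- The Haemers bound of a noncommutative graph `S ⊆ M_ι(ℂ)`. -/
def Haemers {ι : Type} [Fintype ι] [DecidableEq ι]
    (S : Submodule ℂ (Matrix ι ι ℂ)) : ℕ :=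
  sInf { k : ℕ | ∃ m : ℕ, ∃ B : Matrix (Fin m × ι) (Fin m × ι) ℂ,
    (∀ i j : Fin m, blockOf B i j ∈ S) ∧
    (∑ i : Fin m, blockOf B i i) = 1 ∧ B.rank = k }

/-- Rank factorization: the columns of `C` form a basis of the column space of `B`, and `D` holds
the coordinates of the columns of `B` in that basis. -/
theorem exists_rank_factorization {p q : Type*} [Fintype p] [Fintype q] [DecidableEq q]
    (B : Matrix p q ℂ) :
    ∃ (C : Matrix p (Fin B.rank) ℂ) (D : Matrix (Fin B.rank) q ℂ), C * D = B := by
  let b : Module.Basis (Fin B.rank) ℂ (LinearMap.range B.mulVecLin) := Module.finBasis ℂ _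
  let col : q → LinearMap.range B.mulVecLin := fun j => ⟨B.mulVecLin (Pi.single j 1), ⟨_, rfl⟩⟩
  refine ⟨Matrix.of fun a k => (b k : p → ℂ) a, Matrix.of fun k j => b.repr (col j) k, ?_⟩
  ext a j
  have h := congrArg (fun v : LinearMap.range B.mulVecLin => (v : p → ℂ) a) (b.sum_repr (col j))
  simp only [Submodule.coe_sum, Submodule.coe_smul, Finset.sum_apply, Pi.smul_apply,
    smul_eq_mul] at h
  simp only [Matrix.mul_apply, Matrix.of_apply]
  calc _ = ∑ k, b.repr (col j) k * (b k : p → ℂ) a := Finset.sum_congr rfl fun _ _ => mul_comm _ _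
    _ = _ := h
    _ = B a j := by simp [col]

/-- The Haemers bound of a noncommutative graph `S` equals the minimum `k` for which there is
a trace-preserving linear map `Ψ : M_n(ℂ) → M_k(ℂ)`, given by `Ψ(X) = ∑ᵢ Eᵢ X Fᵢ†` with
`∑ᵢ Fᵢ† Eᵢ = I`, such that `Fᵢ† Eⱼ ∈ S` for all `i, j`. -/
theorem haemers_eq_trace_preserving_formulation (n : ℕ)
    (S : Submodule ℂ (Matrix (Fin n) (Fin n) ℂ))
    (hstar : ∀ A ∈ S, Aᴴ ∈ S) (hone : (1 : Matrix (Fin n) (Fin n) ℂ) ∈ S) :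
    Haemers S =
    sInf { k : ℕ | ∃ m : ℕ, ∃ E F : Fin m → Matrix (Fin k) (Fin n) ℂ,
        (∑ i, (F i)ᴴ * E i) = 1 ∧ ∀ i j : Fin m, (F i)ᴴ * E j ∈ S } := by
  have block_mul : ∀ {m k : ℕ} (C : Matrix (Fin m × Fin n) (Fin k) ℂ)
      (D : Matrix (Fin k) (Fin m × Fin n) ℂ) (i j : Fin m),
      blockOf (C * D) i j =
        (Matrix.of fun a l => C (i, a) l) * (Matrix.of fun l b => D l (j, b)) := by
    intros
    ext a b
    simp [blockOf, Matrix.mul_apply]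
  have sub : ∀ k, (∃ m : ℕ, ∃ B : Matrix (Fin m × Fin n) (Fin m × Fin n) ℂ,
      (∀ i j : Fin m, blockOf B i j ∈ S) ∧ (∑ i : Fin m, blockOf B i i) = 1 ∧ B.rank = k) →
      ∃ m : ℕ, ∃ E F : Fin m → Matrix (Fin k) (Fin n) ℂ,
        (∑ i, (F i)ᴴ * E i) = 1 ∧ ∀ i j : Fin m, (F i)ᴴ * E j ∈ S := by
    rintro k ⟨m, B, hS, hsum, rfl⟩
    obtain ⟨C, D, hCD⟩ := exists_rank_factorization B
    refine ⟨m, fun j => Matrix.of fun l b => D l (j, b),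
      fun i => (Matrix.of fun a l => C (i, a) l)ᴴ, ?_, ?_⟩
    · simp only [conjTranspose_conjTranspose, ← block_mul, hCD, hsum]
    · intro i j
      simp only [conjTranspose_conjTranspose, ← block_mul, hCD, hS]
  -- The `1 × 1` block matrix `1` is feasible, so neither infimum is over the empty set.
  have nonempty : {k : ℕ | ∃ m : ℕ, ∃ B : Matrix (Fin m × Fin n) (Fin m × Fin n) ℂ,
      (∀ i j : Fin m, blockOf B i j ∈ S) ∧
      (∑ i : Fin m, blockOf B i i) = 1 ∧ B.rank = k}.Nonempty := by
    have h : ∀ i j : Fin 1, blockOf (1 : Matrix (Fin 1 × Fin n) (Fin 1 × Fin n) ℂ) i j = 1 := by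
      intro i j
      ext a b
      simp [blockOf, Matrix.one_apply, Subsingleton.elim i j]
    exact ⟨_, 1, 1, fun i j => by rw [h]; exact hone, by simp [h], rfl⟩
  apply le_antisymm
  · obtain ⟨m, E, F, hsum, hS⟩ := Nat.sInf_mem (nonempty.mono sub)
    set k := sInf {k : ℕ | ∃ m : ℕ, ∃ E F : Fin m → Matrix (Fin k) (Fin n) ℂ,
      (∑ i, (F i)ᴴ * E i) = 1 ∧ ∀ i j : Fin m, (F i)ᴴ * E j ∈ S}
    let C : Matrix (Fin m × Fin n) (Fin k) ℂ := Matrix.of fun x l => (F x.1)ᴴ x.2 l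
    let D : Matrix (Fin k) (Fin m × Fin n) ℂ := Matrix.of fun l y => E y.1 l y.2
    have hb : ∀ i j, blockOf (C * D) i j = (F i)ᴴ * E j := fun i j => block_mul C D i j
    calc Haemers S ≤ (C * D).rank :=
          Nat.sInf_le ⟨m, C * D, fun i j => by rw [hb]; exact hS i j, by simp only [hb, hsum], rfl⟩
      _ ≤ C.rank := Matrix.rank_mul_le_left C D
      _ ≤ k := (Matrix.rank_le_card_width C).trans_eq (Fintype.card_fin k)
  · exact Nat.sInf_le (sub _ (Nat.sInf_mem nonempty))
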